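/- arXiv:0907.1563 — 2 statements merged into one kernel-verified Lean document; each statement's English description precedes it below -/
import Mathlib

section
/- Let p be a prime, q = p^r, n ≥ 2 an integer with p ∤ n, and χ a Dirichlet character modulo q with χ(−1) = −1. Define h(a) = (n−1)/2 − ⌊na/q⌋ for 1 ≤ a ≤ q−1 with p ∤ a. Then the Fourier coefficient Σ_a h(a)·conj(χ(a)) (summing over 1 ≤ a ≤ q−1, p ∤ a) is nonzero. -/
open Finset

lemma aux_deriv (s : ℂ) {t : ℝ} (ht : 0 < t) :
    HasDerivAt (fun y : ℝ => (y : ℂ) ^ (-s)) (-s * (t : ℂ) ^ (-s - 1)) t := by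
  have h := ((hasDerivAt_id (t : ℂ)).cpow_const (c := -s)
    (by simpa using Complex.ofReal_mem_slitPlane.2 ht)).comp_ofReal
  simpa using h

lemma aux_taylor (s : ℂ) (hs : -2 < s.re) {a b : ℝ} (ha : 0 < a) (hab : a ≤ b) :
    ‖(a : ℂ) ^ (-s) - (b : ℂ) ^ (-s) - s * (b - a) * (b : ℂ) ^ (-s - 1)‖ ≤
      ‖s‖ * ‖s + 1‖ * a ^ (-s.re - 2) * (b - a) * (b - a) := by
  have pos : ∀ t ∈ Set.Icc a b, 0 < t := fun t ht => ha.trans_le ht.1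
  have hC : ∀ t ∈ Set.Icc a b,
      ‖(-s) * (t : ℂ) ^ (-s - 1) - (-s) * (b : ℂ) ^ (-s - 1)‖
        ≤ ‖s‖ * ‖s + 1‖ * a ^ (-s.re - 2) * (b - a) := by
    intro t ht
    have h1 := Convex.norm_image_sub_le_of_norm_hasDerivWithin_le
      (f := fun y : ℝ => (-s) * (y : ℂ) ^ (-s - 1))
      (f' := fun y : ℝ => (-s) * (-(s + 1) * (y : ℂ) ^ (-s - 2)))
      (C := ‖s‖ * ‖s + 1‖ * a ^ (-s.re - 2)) (s := Set.Icc a b) (x := b) (y := t)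
      (fun y hy => by
        have := (aux_deriv (s + 1) (pos y hy)).const_mul (-s)
        have e1 : -(s + 1) = -s - 1 := by ring
        have e2 : -(s + 1) - 1 = -s - 2 := by ring
        rw [e2] at this
        simp only [e1] at this ⊢
        exact this.hasDerivWithinAt)
      (fun y hy => by
        rw [norm_mul, norm_mul, norm_neg, norm_neg,
          Complex.norm_cpow_eq_rpow_re_of_pos (pos y hy), ← mul_assoc]
        have : (-s - 2 : ℂ).re = -s.re - 2 := by simp
        rw [this]
        gcongr ?_ * ?_
        exact Real.rpow_le_rpow_of_nonpos ha hy.1 (by linarith))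
      (convex_Icc a b) ⟨hab, le_rfl⟩ ht
    refine h1.trans ?_
    have : ‖t - b‖ ≤ b - a := by
      rw [Real.norm_eq_abs, abs_le]; constructor <;> linarith [ht.1, ht.2]
    gcongr
  have h2 := Convex.norm_image_sub_le_of_norm_hasDerivWithin_le
      (f := fun y : ℝ => (y : ℂ) ^ (-s) - (-s * (b : ℂ) ^ (-s - 1)) * (y : ℂ))
      (f' := fun y : ℝ => (-s) * (y : ℂ) ^ (-s - 1) - (-s) * (b : ℂ) ^ (-s - 1))
      (C := ‖s‖ * ‖s + 1‖ * a ^ (-s.re - 2) * (b - a)) (s := Set.Icc a b) (x := b) (y := a)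
      (fun y hy => by
        have := (aux_deriv s (pos y hy)).sub
          (((hasDerivAt_id (y : ℂ)).comp_ofReal).const_mul (-s * (b : ℂ) ^ (-s - 1)))
        simp only [mul_one] at this
        exact this.hasDerivWithinAt) hC (convex_Icc a b) ⟨hab, le_rfl⟩ ⟨le_rfl, hab⟩
  have h3 : ‖a - b‖ = b - a := by
    rw [Real.norm_eq_abs, abs_sub_comm, abs_of_nonneg (by linarith)]
  rw [h3] at h2
  refine le_of_eq_of_le (congrArg _ ?_) h2
  ring

/-- The correction terms. -/
noncomputable def auxT (x : ℝ) (n : ℕ) (s : ℂ) : ℂ :=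
  (((n : ℝ) + x : ℝ) : ℂ) ^ (-s) - (((n : ℝ) + 1 : ℝ) : ℂ) ^ (-s)
    - s * ((((n : ℝ) + 1 : ℝ) : ℂ) - (((n : ℝ) + x : ℝ) : ℂ)) * (((n : ℝ) + 1 : ℝ) : ℂ) ^ (-s - 1)

lemma auxT_bound {x : ℝ} (hx : 0 < x) (hx1 : x ≤ 1) (n : ℕ) {s : ℂ} (hs : -(1 / 2) < s.re)
    (hs3 : ‖s‖ < 3) :
    ‖auxT x n s‖ ≤ 12 * x ^ (-5 : ℝ) * (1 / |(n : ℝ) + 1| ^ (3 / 2 : ℝ)) := by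
  have hn : (0 : ℝ) ≤ n := n.cast_nonneg
  have h := aux_taylor s (by linarith) (a := n + x) (b := n + 1) (by linarith) (by linarith)
  refine h.trans ?_
  have e : (n : ℝ) + 1 - (n + x) = 1 - x := by ring
  have hre : s.re ≤ 3 := (Complex.re_le_norm s).trans hs3.le
  have h1 : ((n : ℝ) + x) ^ (-s.re - 2) ≤ x ^ (-5 : ℝ) * (1 / |(n : ℝ) + 1| ^ (3 / 2 : ℝ)) := by
    calc ((n : ℝ) + x) ^ (-s.re - 2) ≤ (x * (n + 1)) ^ (-s.re - 2) :=
          Real.rpow_le_rpow_of_nonpos (by positivity) (by nlinarith) (by linarith)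
      _ = x ^ (-s.re - 2) * ((n : ℝ) + 1) ^ (-s.re - 2) :=
          Real.mul_rpow hx.le (by linarith)
      _ ≤ x ^ (-5 : ℝ) * ((n : ℝ) + 1) ^ (-(3 / 2) : ℝ) := by
          gcongr ?_ * ?_
          · exact Real.rpow_le_rpow_of_exponent_ge hx hx1 (by linarith)
          · exact Real.rpow_le_rpow_of_exponent_le (by linarith) (by linarith)
      _ = _ := by rw [Real.rpow_neg (x := (n : ℝ) + 1) (by linarith), abs_of_pos (by linarith), one_div]
  rw [e]
  have h4 : ‖s + 1‖ ≤ 4 := (norm_add_le _ _).trans (by rw [norm_one]; linarith)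
  calc ‖s‖ * ‖s + 1‖ * ((n : ℝ) + x) ^ (-s.re - 2) * (1 - x) * (1 - x)
      ≤ 3 * 4 * (x ^ (-5 : ℝ) * (1 / |(n : ℝ) + 1| ^ (3 / 2 : ℝ))) * 1 * 1 := by
        gcongr <;> linarith
    _ = _ := by ring

lemma auxT_diff {x : ℝ} (hx : 0 < x) (hx1 : x ≤ 1) :
    DifferentiableOn ℂ (fun s => ∑' n : ℕ, auxT x n s)
      {s : ℂ | -(1 / 2) < s.re ∧ ‖s‖ < 3} := by
  refine Complex.differentiableOn_tsum_of_summable_norm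
    (u := fun n : ℕ => 12 * x ^ (-5 : ℝ) * (1 / |(n : ℝ) + 1| ^ (3 / 2 : ℝ))) ?_ ?_ ?_ ?_
  · exact ((Real.summable_one_div_nat_add_rpow 1 (3 / 2)).2 (by norm_num)).mul_left _
  · intro n
    have h1 : (((n : ℝ) + x : ℝ) : ℂ) ≠ 0 := by
      exact_mod_cast (by positivity : (n : ℝ) + x ≠ 0)
    have h2 : (((n : ℝ) + 1 : ℝ) : ℂ) ≠ 0 := by
      exact_mod_cast (by positivity : (n : ℝ) + 1 ≠ 0)
    unfold auxT
    intro s _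
    apply DifferentiableAt.differentiableWithinAt
    refine ((DifferentiableAt.const_cpow (by fun_prop) (.inl h1)).sub
      (DifferentiableAt.const_cpow (by fun_prop) (.inl h2))).sub
      (DifferentiableAt.mul (by fun_prop) (DifferentiableAt.const_cpow (by fun_prop) (.inl h2)))
  · exact (isOpen_lt continuous_const Complex.continuous_re).inter
      (isOpen_lt continuous_norm continuous_const)
  · intro n s hs
    exact auxT_bound hx hx1 n hs.1 hs.2

open HurwitzZeta Filter Topology in
lemma aux_hurwitz_zero {x : ℝ} (hx : 0 < x) (hx1 : x ≤ 1) :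
    hurwitzZeta (x : UnitAddCircle) 0 = 1 / 2 - x := by
  set V : Set ℂ := {s : ℂ | -(1 / 2) < s.re ∧ ‖s‖ < 3} with hV
  have hVo : IsOpen V := (isOpen_lt continuous_const Complex.continuous_re).inter
      (isOpen_lt continuous_norm continuous_const)
  set U : Set ℂ := V ∩ {s : ℂ | 0 < s.im} with hU
  have hUo : IsOpen U := hVo.inter (isOpen_lt continuous_const Complex.continuous_im)
  have hUc : Convex ℝ U := by
    refine Convex.inter (Convex.inter (convex_halfSpace_re_gt _) ?_) (convex_halfSpace_im_gt _)
    have e : {s : ℂ | ‖s‖ < 3} = Metric.ball 0 3 := by ext; simp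
    change Convex ℝ {s : ℂ | ‖s‖ < 3}
    rw [e]
    exact convex_ball (0 : ℂ) 3
  set G : ℂ → ℂ := fun s => ∑' n : ℕ, auxT x n s with hG
  have hGd : DifferentiableOn ℂ G V := auxT_diff hx hx1
  have hG0 : G 0 = 0 := by simp [hG, auxT]
  set F : ℂ → ℂ := fun s => hurwitzZeta (x : UnitAddCircle) s - riemannZeta s
    - s * (1 - x) * riemannZeta (s + 1) with hF
  have hne : ∀ s ∈ U, ∀ y : ℝ, s ≠ y := by
    rintro s hs y rfl
    have := hs.2
    simp at this
  have hFd : DifferentiableOn ℂ F U := by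
    intro s hs
    have h1 : s ≠ 1 := by simpa using hne s hs 1
    have h0 : s + 1 ≠ 1 := by simpa using hne s hs 0
    apply DifferentiableAt.differentiableWithinAt
    refine ((differentiableAt_hurwitzZeta _ h1).sub (differentiableAt_riemannZeta h1)).sub
      (DifferentiableAt.mul (by fun_prop) ?_)
    exact (differentiableAt_riemannZeta h0).comp s (by fun_prop)
  have hFG1 : ∀ s : ℂ, 1 < s.re → F s = G s := by
    intro s hs
    have hz : ∀ {w : ℂ}, 1 < w.re → HasSum (fun n : ℕ => 1 / (n + 1 : ℂ) ^ w) (riemannZeta w) := by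
      intro w hw
      have := hasSum_hurwitzZeta_of_one_lt_re (a := 1) (by simp) hw
      simpa [show ((1 : ℝ) : UnitAddCircle) = 0 from AddCircle.coe_period 1,
        hurwitzZeta_zero] using this
    have h1 := (hasSum_hurwitzZeta_of_one_lt_re (a := x) ⟨hx.le, hx1⟩ hs).sub (hz hs)
    have h2 := h1.sub ((hz (w := s + 1) (by simp; linarith)).mul_left (s * (1 - x)))
    rw [hF, hG]
    simp only
    rw [← h2.tsum_eq]
    refine tsum_congr fun n => ?_
    unfold auxT
    push_cast
    rw [Complex.cpow_neg, Complex.cpow_neg, show -s - 1 = -(s + 1) by ring, Complex.cpow_neg]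
    ring
  have hEq : Set.EqOn F G U := by
    have hz0 : (2 + Complex.I : ℂ) ∈ U := by
      refine ⟨⟨by norm_num, ?_⟩, by simp⟩
      rw [← sq_lt_sq₀ (norm_nonneg _) (by norm_num), Complex.sq_norm, Complex.normSq_apply]
      norm_num
    refine (hFd.analyticOnNhd hUo).eqOn_of_preconnected_of_eventuallyEq
      ((hGd.mono Set.inter_subset_left).analyticOnNhd hUo) hUc.isPreconnected hz0 ?_
    refine eventually_of_mem ?_ (fun t (ht : 1 < t.re) => hFG1 t ht)
    exact (Complex.continuous_re.isOpen_preimage _ isOpen_Ioi).mem_nhds (by simp)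
  -- limits at `0` along the upper half plane
  have hU0 : U ∈ 𝓝[{s : ℂ | 0 < s.im}] 0 := by
    rw [hU, Set.inter_comm]
    exact inter_mem_nhdsWithin _ (hVo.mem_nhds (by simp [hV]))
  have : (𝓝[{s : ℂ | 0 < s.im}] (0 : ℂ)).NeBot := by
    rw [← mem_closure_iff_nhdsWithin_neBot, Complex.closure_setOfPred_lt_im]
    simp
  have hG' : Tendsto G (𝓝[{s : ℂ | 0 < s.im}] 0) (𝓝 0) := by
    have : ContinuousAt G 0 := (hGd.differentiableAt (hVo.mem_nhds (by simp [hV]))).continuousAt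
    have h := this.tendsto
    rw [hG0] at h
    exact h.mono_left nhdsWithin_le_nhds
  have hF' : Tendsto F (𝓝[{s : ℂ | 0 < s.im}] 0)
      (𝓝 (hurwitzZeta (x : UnitAddCircle) 0 - riemannZeta 0 - (1 - x) * 1)) := by
    refine Tendsto.sub (Tendsto.sub ?_ ?_) ?_
    · exact (differentiableAt_hurwitzZeta _ zero_ne_one).continuousAt.tendsto.mono_left
        nhdsWithin_le_nhds
    · exact (differentiableAt_riemannZeta zero_ne_one).continuousAt.tendsto.mono_left
        nhdsWithin_le_nhds
    · have hm : Tendsto (fun s : ℂ => s + 1) (𝓝[{s : ℂ | 0 < s.im}] 0) (𝓝[≠] 1) := by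
        refine tendsto_nhdsWithin_iff.2 ⟨?_, ?_⟩
        · have : Tendsto (fun s : ℂ => s + 1) (𝓝 0) (𝓝 (0 + 1)) :=
            (continuous_id.add continuous_const).tendsto 0
          rw [zero_add] at this
          exact this.mono_left nhdsWithin_le_nhds
        · filter_upwards [self_mem_nhdsWithin] with s hs h
          have : s = 0 := by simpa using h
          subst this
          simp at hs
      have := (riemannZeta_residue_one.comp hm).const_mul (1 - x : ℂ)
      refine this.congr fun s => ?_
      simp only [Function.comp]
      ring
  have hlim := tendsto_nhds_unique (hF'.congr' (eventually_of_mem hU0 hEq)) hG'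
  rw [riemannZeta_zero] at hlim
  linear_combination hlim

open DirichletCharacter in
lemma aux_LFunction_zero {q : ℕ} [NeZero q] (ψ : DirichletCharacter ℂ q) (hψ : ψ ≠ 1) :
    LFunction ψ 0 = -(∑ j : ZMod q, (j.val : ℂ) * ψ j) / q := by
  have hsum : ∑ j, ψ j = 0 := ψ.sum_eq_zero_of_ne_one hψ
  have hq : (q : ℂ) ≠ 0 := NeZero.ne _
  have hq1 : q ≠ 1 := fun h => hψ (level_one' _ h)
  have key : ∀ j : ZMod q, ψ j * HurwitzZeta.hurwitzZeta (ZMod.toAddCircle j) 0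
      = 1 / 2 * ψ j - (1 / q) * ((j.val : ℂ) * ψ j) := by
    intro j
    rcases eq_or_ne j 0 with rfl | hj
    · simp [ψ.map_zero' hq1]
    · have hv : 0 < j.val := Nat.pos_of_ne_zero (by simpa using hj)
      have hlt : j.val < q := j.val_lt
      have hq0 : (0 : ℝ) < q := by exact_mod_cast hv.trans hlt
      rw [ZMod.toAddCircle_apply, aux_hurwitz_zero (by positivity)
        ((div_le_one hq0).2 (by exact_mod_cast hlt.le))]
      push_cast
      ring
  rw [LFunction, ZMod.LFunction, Finset.sum_congr rfl (fun j _ => key j), Finset.sum_sub_distrib,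
    ← Finset.mul_sum, ← Finset.mul_sum, hsum]
  simp
  ring

open DirichletCharacter in
lemma aux_primitive {N : ℕ} [NeZero N] (φ : DirichletCharacter ℂ N) (hφ : φ.IsPrimitive)
    (ho : φ.Odd) (h1 : φ ≠ 1) : LFunction φ 0 ≠ 0 := by
  have hN : N ≠ 1 := fun h => h1 (level_one' _ h)
  have hp : (φ⁻¹).IsPrimitive := by
    rw [isPrimitive_def, conductor_inv]; exact hφ
  have hfe := hp.completedLFunction_one_sub 0
  rw [inv_inv, sub_zero] at hfe
  have hL := LFunction_apply_one_ne_zero (χ := φ⁻¹) (inv_ne_one.2 h1)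
  rw [LFunction_eq_completed_div_gammaFactor _ _ (.inr hN), hfe] at hL
  rw [LFunction_eq_completed_div_gammaFactor _ _ (.inr hN), ho.gammaFactor_def]
  refine div_ne_zero ?_ ?_
  · intro h
    simp [h] at hL
  · exact Complex.Gammaℝ_ne_zero_of_re_pos (by simp)

open DirichletCharacter in
lemma aux_primePow {p r q : ℕ} (hp : p.Prime) (hq : q = p ^ r) [NeZero q]
    (ψ : DirichletCharacter ℂ q) (ho : ψ.Odd) (h1 : ψ ≠ 1) : LFunction ψ 0 ≠ 0 := by
  have : NeZero ψ.conductor := ⟨ψ.conductor_ne_zero⟩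
  have hc : ψ.conductor ≠ 1 := fun h => h1 (ψ.eq_one_iff_conductor_eq_one.2 h)
  have hd := ψ.conductor_dvd_level
  have hpc : p ∣ ψ.conductor := by
    obtain ⟨k, -, hk⟩ := (Nat.dvd_prime_pow hp).1 (hd.trans hq.dvd)
    rw [hk]
    apply dvd_pow_self
    rintro rfl
    exact hc (by simpa using hk)
  have ho' : ψ.primitiveCharacter.Odd := by
    have := ψ.primitiveCharacter_apply_of_isCoprime (a := -1) (isCoprime_one_left.neg_left)
    rw [DirichletCharacter.Odd] at ho ⊢
    push_cast at this
    rw [this, ho]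
  have h1' : ψ.primitiveCharacter ≠ 1 := fun h =>
    h1 (by rw [← ψ.changeLevel_primitiveCharacter, h, changeLevel_one])
  have hz : ψ.primitiveCharacter (p : ZMod ψ.conductor) = 0 := by
    apply MulChar.map_nonunit
    rw [ZMod.isUnit_iff_coprime]
    intro h
    exact hp.one_lt.ne' (Nat.dvd_one.1 (h ▸ Nat.dvd_gcd dvd_rfl hpc))
  rw [← ψ.changeLevel_primitiveCharacter, LFunction_changeLevel _ _ (.inl h1')]
  refine mul_ne_zero (aux_primitive _ ψ.primitiveCharacter_isPrimitive ho' h1') ?_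
  rw [Finset.prod_ne_zero_iff]
  intro l hl
  have : l = p := (Nat.prime_dvd_prime_iff_eq (Nat.prime_of_mem_primeFactors hl) hp).1
    ((Nat.prime_of_mem_primeFactors hl).dvd_of_dvd_pow
      (hq ▸ Nat.dvd_of_mem_primeFactors hl))
  subst this
  simp [hz]

/-- Let `p` be a prime, `q = p^r`, `n ≥ 2` with `p ∤ n`, and `χ` a Dirichlet character
modulo `q` with `χ(−1) = −1`. With `h(a) = (n−1)/2 − ⌊na/q⌋`, the Fourier coefficient
`Σ_a h(a)·conj(χ(a))` (summing over `1 ≤ a ≤ q−1` with `p ∤ a`) is nonzero. -/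
theorem stmt5 (p r n q : ℕ) (hp : p.Prime) (hq : q = p ^ r) (hn : 2 ≤ n)
    (hpn : ¬ p ∣ n) (χ : DirichletCharacter ℂ q) (hχ : χ (-1) = -1) :
    ∑ a ∈ (range q).filter (fun a => ¬ p ∣ a),
        (((n : ℂ) - 1) / 2 - ((n * a / q : ℕ) : ℂ)) * (starRingEnd ℂ) (χ (a : ZMod q))
      ≠ 0 := by
  have : NeZero q := ⟨by rw [hq]; exact (pow_pos hp.pos r).ne'⟩
  have hqC : (q : ℂ) ≠ 0 := NeZero.ne _
  have hχ1 : χ ≠ 1 := by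
    rintro rfl
    rw [MulChar.one_apply isUnit_one.neg] at hχ
    norm_num at hχ
  have hr : r ≠ 0 := by
    rintro rfl
    exact hχ1 (DirichletCharacter.level_one' _ (by simpa using hq))
  have hpq : p ∣ q := hq ▸ dvd_pow_self p hr
  set ψ : DirichletCharacter ℂ q := χ⁻¹ with hψ
  have hconj : ∀ a : ZMod q, (starRingEnd ℂ) (χ a) = ψ a := fun a => MulChar.star_apply' χ a
  have hψ1 : ψ ≠ 1 := inv_ne_one.2 hχ1
  have hψo : ψ.Odd := by
    rw [DirichletCharacter.Odd, ← hconj, hχ]; simp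
  set S : ℂ := ∑ j : ZMod q, (j.val : ℂ) * ψ j with hS
  have hS0 : S ≠ 0 := by
    intro h
    refine aux_primePow hp hq ψ hψo hψ1 ?_
    rw [aux_LFunction_zero ψ hψ1, ← hS, h]
    simp
  have hsum : ∑ j, ψ j = 0 := ψ.sum_eq_zero_of_ne_one hψ1
  have hu : IsUnit (n : ZMod q) := by
    rw [ZMod.isUnit_iff_coprime]
    rw [hq]
    exact Nat.Coprime.pow_right r ((hp.coprime_iff_not_dvd.2 hpn).symm)
  have hmain : ∑ a ∈ (range q).filter (fun a => ¬ p ∣ a),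
        (((n : ℂ) - 1) / 2 - ((n * a / q : ℕ) : ℂ)) * (starRingEnd ℂ) (χ (a : ZMod q))
      = ∑ j : ZMod q, (((n : ℂ) - 1) / 2 - ((n * j.val / q : ℕ) : ℂ)) * ψ j := by
    rw [Finset.sum_filter_of_ne]
    · refine Finset.sum_nbij' (fun a => (a : ZMod q)) (fun j => j.val) ?_ ?_ ?_ ?_ ?_
      · simp
      · intro j _; simpa using j.val_lt
      · intro a ha; exact ZMod.val_cast_of_lt (by simpa using ha)
      · intro j _; simp
      · intro a ha
        rw [hconj, ZMod.val_cast_of_lt (by simpa using ha)]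
    · intro a _ hne hdvd
      apply hne
      have : χ (a : ZMod q) = 0 := by
        apply MulChar.map_nonunit
        rw [ZMod.isUnit_iff_coprime]
        intro h
        exact hp.one_lt.ne' (Nat.dvd_one.1 (h ▸ Nat.dvd_gcd hdvd hpq))
      simp [this]
  have hperm : ∑ j : ZMod q, (((n : ZMod q) * j).val : ℂ) * ψ j = χ n * S := by
    obtain ⟨u, hu'⟩ := hu
    rw [hS, ← Equiv.sum_comp (Units.mulLeft u) (fun j : ZMod q => (j.val : ℂ) * ψ j), Finset.mul_sum]
    refine Finset.sum_congr rfl fun j _ => ?_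
    simp only [Units.mulLeft_apply, hu', map_mul]
    have : χ (n : ZMod q) * ψ (n : ZMod q) = 1 := by
      rw [← MulChar.mul_apply, hψ, mul_inv_cancel, ← hu']
      exact MulChar.one_apply_coe u
    linear_combination (-((((n : ZMod q) * j).val : ℂ) * ψ j)) * this
  have hfloor : ∀ j : ZMod q, ((n * j.val / q : ℕ) : ℂ)
      = (n * j.val - (((n : ZMod q) * j).val : ℂ)) / q := by
    intro j
    have h1 : ((n : ZMod q) * j).val = n * j.val % q := by
      rw [← ZMod.val_natCast]; simp
    have h2 := Nat.div_add_mod (n * j.val) q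
    rw [← h1] at h2
    rw [eq_div_iff hqC, eq_sub_iff_add_eq, mul_comm]
    exact_mod_cast h2
  have htot : ∑ j : ZMod q, (((n : ℂ) - 1) / 2 - ((n * j.val / q : ℕ) : ℂ)) * ψ j
      = (χ n - n) * S / q := by
    have : ∀ j : ZMod q, (((n : ℂ) - 1) / 2 - ((n * j.val / q : ℕ) : ℂ)) * ψ j
        = ((n : ℂ) - 1) / 2 * ψ j - (n / q) * ((j.val : ℂ) * ψ j)
          + (1 / q) * ((((n : ZMod q) * j).val : ℂ) * ψ j) := by
      intro j
      rw [hfloor]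
      ring
    rw [Finset.sum_congr rfl fun j _ => this j, Finset.sum_add_distrib, Finset.sum_sub_distrib,
      ← Finset.mul_sum, ← Finset.mul_sum, ← Finset.mul_sum, hsum, hperm, ← hS]
    ring
  rw [hmain, htot]
  refine div_ne_zero (mul_ne_zero ?_ hS0) hqC
  intro h
  have h1 : ‖(n : ℂ)‖ ≤ 1 := by
    rw [← sub_eq_zero.1 h]; exact χ.norm_le_one _
  rw [Complex.norm_natCast] at h1
  have : n ≤ 1 := by exact_mod_cast h1
  omega
end

section
/- Let p be a prime, q = p^r, and χ a primitive Dirichlet character modulo q with χ(−1) = −1. Then S_q(conj(χ)) := Σ_{a=0}^{q−1} a·conj(χ(a)) satisfies S_q(conj(χ)) = −(q·τ_q(conj(χ))/(πi))·L(1,χ), where τ_q(ψ) = Σ_{a=0}^{q−1} e^{2πia/q} ψ(a) is the Gauss sum and L(1,χ) = Σ_{m=1}^∞ χ(m)/m. In particular S_q(conj(χ)) ≠ 0. -/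
open Finset
lemma aux_sum_zmod (q : ℕ) [NeZero q] (F : ℕ → ℂ) :
    ∑ a : ZMod q, F a.val = ∑ a ∈ range q, F a := by
  refine Finset.sum_nbij' (fun a => a.val) (fun a => (a : ZMod q)) ?_ ?_ ?_ ?_ ?_
  · intro a _; exact mem_range.2 (ZMod.val_lt a)
  · simp
  · intro a _; simp
  · intro a ha; exact ZMod.val_cast_of_lt (mem_range.1 ha)
  · simp

lemma aux_bdd (q : ℕ) [NeZero q] (f : ZMod q → ℂ) (h0 : ∑ a, f a = 0) (hf : ∀ a, ‖f a‖ ≤ 1)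
    (N : ℕ) : ‖∑ n ∈ range N, f (n : ZMod q)‖ ≤ q := by
  induction N using Nat.strong_induction_on with
  | _ N ih =>
    by_cases hN : N < q
    · refine (norm_sum_le _ _).trans ((sum_le_sum fun i _ => hf _).trans ?_)
      simp; exact_mod_cast hN.le
    · obtain ⟨M, rfl⟩ := Nat.exists_eq_add_of_le (not_lt.1 hN)
      rw [sum_range_add]
      have : ∑ n ∈ range q, f (n : ZMod q) = 0 := by
        rw [← aux_sum_zmod q (fun n => f (n : ZMod q)), ← h0]
        simp
      rw [this]
      simpa using ih M (by have := NeZero.pos q; omega)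

lemma aux_parts (w c : ℕ → ℂ) (N : ℕ) :
    ∑ n ∈ range N, w n * c n = w N * ∑ n ∈ range N, c n
      + ∑ n ∈ range N, (w n - w (n+1)) * ∑ k ∈ range (n+1), c k := by
  induction N with
  | zero => simp
  | succ N ih =>
    rw [sum_range_succ, ih, sum_range_succ (fun n => (w n - w (n+1)) * _),
      sum_range_succ c N]
    ring

lemma aux_diff (s : ℝ) (h1 : 1 ≤ s) (h2 : s ≤ 2) (n : ℕ) :
    |((n : ℝ) + 1) ^ (-s) - ((n : ℝ) + 2) ^ (-s)| ≤ 2 * (1 / ((n + 1 : ℕ) : ℝ) ^ 2) := by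
  have hn : (0 : ℝ) ≤ n := n.cast_nonneg
  have hp : (0 : ℝ) < (n : ℝ) + 1 := by positivity
  have hp2 : (0 : ℝ) < (n : ℝ) + 2 := by positivity
  have e : ((n : ℝ) + 2) ^ (-s) = ((n : ℝ) + 1) ^ (-s) * (((n : ℝ) + 1) / (n + 2)) ^ s := by
    rw [Real.div_rpow hp.le hp2.le, Real.rpow_neg hp.le, Real.rpow_neg hp2.le]
    have := (Real.rpow_pos_of_pos hp s).ne'
    field_simp
  have hle : ((n : ℝ) + 1) / (n + 2) ≤ 1 := by rw [div_le_one hp2]; linarith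
  have ha : (((n : ℝ) + 1) / (n + 2)) ^ s ≤ 1 := Real.rpow_le_one (by positivity) hle (by linarith)
  have hb : (((n : ℝ) + 1) / (n + 2)) ^ (2 : ℝ) ≤ (((n : ℝ) + 1) / (n + 2)) ^ s :=
    Real.rpow_le_rpow_of_exponent_ge (by positivity) hle h2
  have hc : ((n : ℝ) + 1) ^ (-s) ≤ ((n : ℝ) + 1)⁻¹ := by
    rw [← Real.rpow_neg_one]
    exact Real.rpow_le_rpow_of_exponent_le (by linarith) (by linarith)
  have hd : 0 ≤ ((n : ℝ) + 1) ^ (-s) := Real.rpow_nonneg hp.le _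
  rw [e, abs_of_nonneg (by nlinarith)]
  calc _ = ((n : ℝ) + 1) ^ (-s) * (1 - (((n : ℝ) + 1) / (n + 2)) ^ s) := by ring
    _ ≤ ((n : ℝ) + 1)⁻¹ * (1 - (((n : ℝ) + 1) / (n + 2)) ^ (2:ℝ)) := by
      apply mul_le_mul hc (by linarith) (by linarith) (by positivity)
    _ ≤ ((n : ℝ) + 1)⁻¹ * (2 * ((n : ℝ) + 1)⁻¹) := by
      gcongr
      rw [Real.rpow_two]
      have : ((n : ℝ) + 1) / (n + 2) = 1 - 1 / (n+2) := by field_simp; ring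
      rw [this]
      have h3 : 1 / ((n : ℝ) + 2) ≤ ((n : ℝ) + 1)⁻¹ := by
        rw [← one_div]; gcongr; norm_num
      nlinarith [sq_nonneg (1 / ((n : ℝ) + 2))]
    _ = _ := by push_cast; field_simp

/-- The Abel-summed series. -/
noncomputable def auxF (c : ℕ → ℂ) (s : ℝ) : ℂ :=
  ∑' n : ℕ, (((((n : ℝ) + 1) ^ (-s) - ((n : ℝ) + 2) ^ (-s) : ℝ)) : ℂ) * ∑ k ∈ range (n+1), c k

lemma aux_summ : Summable (fun n : ℕ => 2 * (1 / ((n + 1 : ℕ) : ℝ) ^ 2)) := by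
  apply Summable.mul_left
  exact (summable_nat_add_iff (f := fun n : ℕ => 1 / (n : ℝ) ^ 2) 1).2
    (Real.summable_one_div_nat_pow.2 one_lt_two)

lemma aux_bound (c : ℕ → ℂ) (C : ℝ) (hC : ∀ N, ‖∑ n ∈ range N, c n‖ ≤ C)
    (s : ℝ) (h1 : 1 ≤ s) (h2 : s ≤ 2) (n : ℕ) :
    ‖(((((n : ℝ) + 1) ^ (-s) - ((n : ℝ) + 2) ^ (-s) : ℝ)) : ℂ) * ∑ k ∈ range (n+1), c k‖ ≤
      2 * (1 / ((n + 1 : ℕ) : ℝ) ^ 2) * C := by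
  rw [norm_mul, Complex.norm_real, Real.norm_eq_abs]
  exact mul_le_mul (aux_diff s h1 h2 n) (hC _) (norm_nonneg _) (by positivity)

lemma aux_tendsto (c : ℕ → ℂ) (C : ℝ) (hC : ∀ N, ‖∑ n ∈ range N, c n‖ ≤ C)
    (s : ℝ) (h1 : 1 ≤ s) (h2 : s ≤ 2) :
    Filter.Tendsto (fun N => ∑ n ∈ range N, ((((n : ℝ) + 1) ^ (-s) : ℝ) : ℂ) * c n)
      Filter.atTop (nhds (auxF c s)) := by
  have hs : Summable (fun n : ℕ =>
      (((((n : ℝ) + 1) ^ (-s) - ((n : ℝ) + 2) ^ (-s) : ℝ)) : ℂ) * ∑ k ∈ range (n+1), c k) :=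
    Summable.of_norm_bounded (aux_summ.mul_right C) (aux_bound c C hC s h1 h2)
  have hsum := hs.hasSum.tendsto_sum_nat
  have hz : Filter.Tendsto (fun N : ℕ => ((((N : ℝ) + 1) ^ (-s) : ℝ) : ℂ) * ∑ n ∈ range N, c n)
      Filter.atTop (nhds 0) := by
    have t1 : Filter.Tendsto (fun N : ℕ => ((N : ℝ) + 1) ^ (-s) * C) Filter.atTop (nhds 0) := by
      have := ((tendsto_rpow_neg_atTop (y := s) (by linarith)).comp
        (Filter.tendsto_atTop_add_const_right _ (1 : ℝ) tendsto_natCast_atTop_atTop)).mul_const C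
      simpa [Function.comp_def] using this
    refine squeeze_zero_norm (fun N => ?_) t1
    rw [norm_mul, Complex.norm_real, Real.norm_eq_abs, abs_of_nonneg (by positivity)]
    exact mul_le_mul_of_nonneg_left (hC N) (by positivity)
  have := hz.add hsum
  rw [zero_add] at this
  refine this.congr fun N => ?_
  rw [aux_parts (fun n => ((((n : ℝ) + 1) ^ (-s) : ℝ) : ℂ))]
  congr 1
  refine sum_congr rfl fun n _ => ?_
  congr 1
  push_cast
  rw [add_assoc]; norm_num

lemma aux_cont (c : ℕ → ℂ) (C : ℝ) (hC : ∀ N, ‖∑ n ∈ range N, c n‖ ≤ C) :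
    Filter.Tendsto (auxF c) (nhdsWithin 1 (Set.Ioi 1)) (nhds (auxF c 1)) := by
  unfold auxF
  refine tendsto_tsum_of_dominated_convergence (aux_summ.mul_right C) (fun n => ?_) ?_
  · refine Filter.Tendsto.mono_left ?_ nhdsWithin_le_nhds
    refine Filter.Tendsto.mul_const _ ?_
    refine (Complex.continuous_ofReal.tendsto _).comp ?_
    have hp : (0 : ℝ) < (n : ℝ) + 1 := by positivity
    have hp2 : (0 : ℝ) < (n : ℝ) + 2 := by positivity
    have : Continuous fun s : ℝ => ((n : ℝ) + 1) ^ (-s) - ((n : ℝ) + 2) ^ (-s) :=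
      (continuous_const.rpow continuous_neg fun _ => Or.inl hp.ne').sub
        (continuous_const.rpow continuous_neg fun _ => Or.inl hp2.ne')
    exact this.tendsto 1
  · have : Set.Ioc (1:ℝ) 2 ∈ nhdsWithin (1:ℝ) (Set.Ioi 1) := Ioc_mem_nhdsGT (by norm_num)
    filter_upwards [this] with s hs n
    exact aux_bound c C hC s hs.1.le hs.2 n

lemma aux_log (α : ℝ) (h0 : 0 < α) (h1 : α < Real.pi) :
    1 - Complex.exp (2 * α * Complex.I) ∈ Complex.slitPlane ∧
    Complex.log (1 - Complex.exp (2 * α * Complex.I)) =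
      (Real.log (2 * Real.sin α) : ℂ) + (α - Real.pi / 2) * Complex.I := by
  have hs := Real.sin_pos_of_pos_of_lt_pi h0 h1
  have e : 1 - Complex.exp (2 * α * Complex.I) =
      Complex.exp ((Real.log (2 * Real.sin α) : ℂ) + (α - Real.pi / 2) * Complex.I) := by
    rw [Complex.exp_add, ← Complex.ofReal_exp, Real.exp_log (by positivity)]
    have : ((α : ℂ) - Real.pi / 2) * Complex.I = α * Complex.I + -(Real.pi / 2 * Complex.I) := by
      ring
    rw [this, Complex.exp_add, Complex.exp_neg, Complex.exp_pi_div_two_mul_I, Complex.inv_I]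
    have e2 : Complex.exp (2 * α * Complex.I) = Complex.exp (α * Complex.I) ^ 2 := by
      rw [← Complex.exp_nat_mul]; congr 1; push_cast; ring
    have e3 := Complex.sin_sq_add_cos_sq (α : ℂ)
    rw [e2, Complex.exp_mul_I]
    push_cast
    linear_combination (-1 : ℂ) * e3 + (2 * Complex.sin α * Complex.sin α - Complex.sin α ^ 2) * Complex.I_sq
  constructor
  · left
    have : (2 * (α : ℂ) * Complex.I) = ((2 * α : ℝ) : ℂ) * Complex.I := by push_cast; rfl
    rw [this, Complex.sub_re, Complex.exp_ofReal_mul_I_re, Real.cos_two_mul, Complex.one_re]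
    nlinarith [Real.sin_sq_add_cos_sq α]
  · rw [e]
    apply Complex.log_exp
    · simp; linarith
    · simp; linarith

lemma aux_prim {q : ℕ} (χ : DirichletCharacter ℂ q) (h : χ.IsPrimitive) : (χ⁻¹).IsPrimitive := by
  have key : ∀ ψ : DirichletCharacter ℂ q, ψ.conductorSet ⊆ (ψ⁻¹).conductorSet := by
    rintro ψ d ⟨hd, ψ₀, h₀⟩
    exact ⟨hd, ψ₀⁻¹, by rw [map_inv, ← h₀]⟩
  have : (χ⁻¹).conductorSet = χ.conductorSet :=
    Set.Subset.antisymm (by simpa using key χ⁻¹) (key χ)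
  rw [DirichletCharacter.isPrimitive_def] at h ⊢
  unfold DirichletCharacter.conductor at h ⊢
  rw [this, h]

lemma aux_gauss_ne {q : ℕ} [NeZero q] (χ : DirichletCharacter ℂ q) (h : χ.IsPrimitive) :
    gaussSum χ ZMod.stdAddChar ≠ 0 := by
  intro h0
  have h1 : ZMod.dft (χ : ZMod q → ℂ) = 0 := by
    ext k
    rw [h.fourierTransform_eq_inv_mul_gaussSum, h0]; simp
  have h2 : (χ : ZMod q → ℂ) = 0 := by simpa using h1
  have := congrFun h2 1
  simp at this

lemma aux_L {q : ℕ} [NeZero q] (χ : DirichletCharacter ℂ q) (hχ : χ ≠ 1) :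
    Filter.Tendsto (fun N : ℕ => ∑ m ∈ range N, χ (m : ZMod q) / (m : ℂ))
        Filter.atTop (nhds (χ.LFunction 1)) := by
  set c : ℕ → ℂ := fun n => χ ((n + 1 : ℕ) : ZMod q) with hc
  have hC : ∀ N, ‖∑ n ∈ range N, c n‖ ≤ q := by
    intro N
    have := aux_bdd q (fun a => χ (a + 1)) ?_ (fun a => DirichletCharacter.norm_le_one χ _) N
    · simpa [hc] using this
    · rw [← MulChar.sum_eq_zero_of_ne_one hχ]
      exact Equiv.sum_comp (Equiv.addRight (1 : ZMod q)) (fun a => χ a)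
  have hs : ∀ s : ℝ, 1 < s → s ≤ 2 → auxF c s = χ.LFunction s := by
    intro s h1 h2
    have hre : 1 < (s : ℂ).re := by simpa using h1
    rw [DirichletCharacter.LFunction_eq_LSeries _ hre]
    have hsum := (ZMod.LSeriesSummable_of_one_lt_re (χ : ZMod q → ℂ) hre).LSeriesHasSum
    have ht := ((Filter.tendsto_add_atTop_iff_nat 1).2 (HasSum.tendsto_sum_nat hsum))
    refine tendsto_nhds_unique (aux_tendsto c q hC s h1.le h2) (ht.congr fun N => ?_)
    rw [sum_range_succ']
    simp only [LSeries.term_zero, add_zero]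
    refine sum_congr rfl fun n _ => ?_
    rw [LSeries.term_of_ne_zero (by omega), div_eq_mul_inv, mul_comm, ← Complex.cpow_neg,
      Complex.ofReal_cpow (by positivity)]
    push_cast
    simp [hc]
  have hlim : auxF c 1 = χ.LFunction 1 := by
    refine tendsto_nhds_unique (aux_cont c q hC) ?_
    have hd := (DirichletCharacter.differentiable_LFunction hχ).continuous
    have h1 : Filter.Tendsto (fun s : ℝ => χ.LFunction s) (nhdsWithin 1 (Set.Ioi 1))
        (nhds (χ.LFunction 1)) := by
      have := (hd.comp Complex.continuous_ofReal).tendsto (1 : ℝ)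
      simpa [Function.comp_def] using this.mono_left nhdsWithin_le_nhds
    refine h1.congr' ?_
    have : Set.Ioc (1:ℝ) 2 ∈ nhdsWithin (1:ℝ) (Set.Ioi 1) := Ioc_mem_nhdsGT (by norm_num)
    filter_upwards [this] with s hs'
    exact (hs s hs'.1 hs'.2).symm
  rw [← hlim, ← Filter.tendsto_add_atTop_iff_nat 1]
  refine (aux_tendsto c q hC 1 le_rfl (by norm_num)).congr fun N => ?_
  rw [sum_range_succ']
  simp only [Nat.cast_zero, div_zero, add_zero]
  refine sum_congr rfl fun n _ => ?_
  rw [Real.rpow_neg_one, div_eq_mul_inv, mul_comm]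
  push_cast
  simp [hc]

lemma aux_exp_lim {q : ℕ} [NeZero q] (χ : DirichletCharacter ℂ q) (hprim : χ.IsPrimitive)
    (hq : q ≠ 1) (L : ℂ)
    (hL : Filter.Tendsto (fun N : ℕ => ∑ m ∈ range N, χ (m : ZMod q) / (m : ℂ))
        Filter.atTop (nhds L)) :
    gaussSum χ⁻¹ ZMod.stdAddChar * L =
      ∑ a : ZMod q, χ⁻¹ a * -Complex.log (1 - ZMod.stdAddChar a) := by
  have hA := Complex.tendsto_tsum_powerSeries_nhdsWithin_lt hL
  rw [Filter.tendsto_map'_iff] at hA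
  have hA' := hA.const_mul (gaussSum χ⁻¹ ZMod.stdAddChar)
  refine tendsto_nhds_unique hA' ?_
  have hB : Filter.Tendsto (fun x : ℝ => ∑ a : ZMod q, χ⁻¹ a *
      -Complex.log (1 - ZMod.stdAddChar a * x)) (nhdsWithin 1 (Set.Iio 1))
      (nhds (∑ a : ZMod q, χ⁻¹ a * -Complex.log (1 - ZMod.stdAddChar a))) := by
    refine tendsto_finsetSum _ fun a _ => ?_
    by_cases ha : a = 0
    · have : χ⁻¹ a = 0 := by
        rw [ha]
        have : Fact (1 < q) := ⟨by have := NeZero.pos q; omega⟩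
        exact MulChar.map_zero _
      simp [this]
    refine Filter.Tendsto.const_mul _ (Filter.Tendsto.neg ?_)
    refine Filter.Tendsto.mono_left ?_ nhdsWithin_le_nhds
    have hmem : 1 - ZMod.stdAddChar a ∈ Complex.slitPlane := by
      have hv : 0 < a.val := Nat.pos_of_ne_zero (by simpa using ha)
      have hq0 : (0 : ℝ) < q := by exact_mod_cast NeZero.pos q
      have := (aux_log (Real.pi * a.val / q) (by positivity) (by
        rw [div_lt_iff₀ hq0]
        exact mul_lt_mul_of_pos_left (by exact_mod_cast ZMod.val_lt a) Real.pi_pos)).1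
      rw [ZMod.stdAddChar_apply, ZMod.toCircle_apply]
      convert this using 3
      push_cast; ring
    have hc : Continuous fun x : ℝ => 1 - ZMod.stdAddChar a * (x : ℂ) := by fun_prop
    have := (hc.tendsto 1).clog (by simpa using hmem)
    simpa using this
  refine hB.congr' ?_
  have : Set.Ioo (0:ℝ) 1 ∈ nhdsWithin (1:ℝ) (Set.Iio 1) := Ioo_mem_nhdsLT (by norm_num)
  filter_upwards [this] with x hx
  have hn : ∀ a : ZMod q, ‖ZMod.stdAddChar a * (x : ℂ)‖ < 1 := by
    intro a
    rw [norm_mul, ZMod.stdAddChar_apply, Circle.norm_coe, Complex.norm_real, Real.norm_eq_abs,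
      abs_of_pos hx.1, one_mul]
    exact hx.2
  have hsum := hasSum_sum (s := (Finset.univ : Finset (ZMod q))) fun a _ =>
    (Complex.hasSum_taylorSeries_neg_log (hn a)).mul_left (χ⁻¹ a)
  rw [← hsum.tsum_eq, Function.comp_apply, ← tsum_mul_left]
  refine tsum_congr fun n => ?_
  have hg := gaussSum_mulShift_of_isPrimitive (ZMod.stdAddChar (N := q)) (aux_prim χ hprim)
    (n : ZMod q)
  rw [inv_inv] at hg
  calc _ = (∑ a : ZMod q, χ⁻¹ a * ZMod.stdAddChar ((n : ZMod q) * a)) * (x ^ n / n) := by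
        rw [sum_mul]
        refine sum_congr rfl fun a _ => ?_
        rw [← nsmul_eq_mul, AddChar.map_nsmul_eq_pow]
        ring
    _ = (χ n * gaussSum χ⁻¹ ZMod.stdAddChar) * (x ^ n / n) := by
        rw [← hg]; rfl
    _ = _ := by ring

lemma aux_log_sum {q : ℕ} [NeZero q] (χ : DirichletCharacter ℂ q) (hχ : χ (-1) = -1)
    (hq : q ≠ 1) (h1 : χ ≠ 1) :
    ∑ a : ZMod q, χ a * -Complex.log (1 - ZMod.stdAddChar a) =
      -(Real.pi * Complex.I / q) * ∑ a : ZMod q, (a.val : ℂ) * χ a := by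
  have hq0 : (0 : ℝ) < q := by exact_mod_cast NeZero.pos q
  have hqc : (q : ℂ) ≠ 0 := by exact_mod_cast NeZero.ne q
  have hz : χ 0 = 0 := by
    have : Fact (1 < q) := ⟨by have := NeZero.pos q; omega⟩
    exact MulChar.map_zero _
  set g : ZMod q → ℂ := fun a => (Real.log (2 * Real.sin (Real.pi * a.val / q)) : ℂ) with hg
  have hterm : ∀ a : ZMod q, χ a * -Complex.log (1 - ZMod.stdAddChar a) =
      -(χ a * g a) + -(Real.pi * Complex.I / q) * ((a.val : ℂ) * χ a)
        + χ a * (Real.pi / 2 * Complex.I) := by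
    intro a
    by_cases ha : a = 0
    · simp [ha, hz]
    have hv : 0 < a.val := Nat.pos_of_ne_zero (by simpa using ha)
    have := (aux_log (Real.pi * a.val / q) (by positivity) (by
        rw [div_lt_iff₀ hq0]
        exact mul_lt_mul_of_pos_left (by exact_mod_cast ZMod.val_lt a) Real.pi_pos)).2
    have e : (ZMod.stdAddChar a : ℂ) =
        Complex.exp (2 * ((Real.pi * a.val / q : ℝ) : ℂ) * Complex.I) := by
      rw [ZMod.stdAddChar_apply, ZMod.toCircle_apply]
      congr 1
      push_cast; ring
    rw [e, this, hg]
    push_cast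
    ring
  have hodd : ∑ a : ZMod q, χ a * g a = 0 := by
    have : ∑ a : ZMod q, χ (-a) * g (-a) = ∑ a : ZMod q, χ a * g a :=
      Equiv.sum_comp (Equiv.neg (ZMod q)) (fun a => χ a * g a)
    have h2 : ∑ a : ZMod q, χ (-a) * g (-a) = -∑ a : ZMod q, χ a * g a := by
      rw [← sum_neg_distrib]
      refine sum_congr rfl fun a _ => ?_
      by_cases ha : a = 0
      · simp [ha, hz]
      have hgg : g (-a) = g a := by
        have : NeZero a := ⟨ha⟩
        simp only [hg]
        rw [ZMod.val_neg_of_ne_zero, Nat.cast_sub (ZMod.val_lt a).le]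
        have : Real.pi * ((q : ℝ) - a.val) / q = Real.pi - Real.pi * a.val / q := by
          field_simp
        rw [this, Real.sin_pi_sub]
      rw [hgg, ← neg_one_mul, map_mul, hχ]
      ring
    rw [this] at h2
    linear_combination h2 / 2
  simp_rw [hterm]
  rw [sum_add_distrib, sum_add_distrib, sum_neg_distrib, hodd, ← mul_sum, ← sum_mul,
    MulChar.sum_eq_zero_of_ne_one h1]
  ring

theorem stmt6 (p r q : ℕ) (hp : p.Prime) (hq : q = p ^ r)
    (χ : DirichletCharacter ℂ q) (hχ : χ (-1) = -1) (hprim : χ.IsPrimitive)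
    (S τ : ℂ)
    (hS : S = ∑ a ∈ range q, (a : ℂ) * (starRingEnd ℂ) (χ (a : ZMod q)))
    (hτ : τ = ∑ a ∈ range q,
        Complex.exp (2 * Real.pi * Complex.I * (a : ℂ) / (q : ℂ)) *
          (starRingEnd ℂ) (χ (a : ZMod q))) :
    ∃ L : ℂ,
      Filter.Tendsto (fun N : ℕ => ∑ m ∈ range N, χ (m : ZMod q) / (m : ℂ))
        Filter.atTop (nhds L) ∧
      S = -((q : ℂ) * τ / ((Real.pi : ℂ) * Complex.I)) * L ∧ S ≠ 0 := by
  have : NeZero q := ⟨by rw [hq]; exact pow_ne_zero _ hp.ne_zero⟩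
  have hqc : (q : ℂ) ≠ 0 := by exact_mod_cast NeZero.ne q
  have hpi : (Real.pi : ℂ) ≠ 0 := by exact_mod_cast Real.pi_ne_zero
  have h11 : (1 : ℂ) ≠ -1 := by norm_num
  have hq1 : q ≠ 1 := by
    intro h
    subst h
    rw [Subsingleton.elim (-1 : ZMod 1) 1, map_one] at hχ
    exact h11 hχ
  have hχ1 : χ ≠ 1 := by
    rintro rfl
    rw [MulChar.one_apply isUnit_one.neg] at hχ
    exact h11 hχ
  have hconj : ∀ a : ZMod q, (starRingEnd ℂ) (χ a) = χ⁻¹ a := fun a => MulChar.star_apply' χ a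
  have hχi : χ⁻¹ (-1) = -1 := by rw [← hconj, hχ]; simp
  have hS' : S = ∑ a : ZMod q, (a.val : ℂ) * χ⁻¹ a := by
    rw [hS, ← aux_sum_zmod q]
    refine sum_congr rfl fun a _ => ?_
    rw [hconj, ZMod.natCast_zmod_val]
  have hτ' : τ = gaussSum χ⁻¹ ZMod.stdAddChar := by
    rw [hτ, ← aux_sum_zmod q, gaussSum]
    refine sum_congr rfl fun a _ => ?_
    rw [hconj, ZMod.natCast_zmod_val, ZMod.stdAddChar_apply, ZMod.toCircle_apply, mul_comm]
  have hL := aux_L χ hχ1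
  have h1 := aux_exp_lim χ hprim hq1 _ hL
  rw [aux_log_sum χ⁻¹ hχi hq1 (by simpa using hχ1), ← hS', ← hτ'] at h1
  have hform : S = -((q : ℂ) * τ / ((Real.pi : ℂ) * Complex.I)) * χ.LFunction 1 := by
    have hI := Complex.I_ne_zero
    field_simp
    field_simp at h1
    linear_combination h1
  refine ⟨_, hL, hform, ?_⟩
  rw [hform]
  refine mul_ne_zero (neg_ne_zero.2 (div_ne_zero (mul_ne_zero hqc ?_)
    (mul_ne_zero hpi Complex.I_ne_zero))) (DirichletCharacter.LFunction_apply_one_ne_zero hχ1)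
  rw [hτ']
  exact aux_gauss_ne _ (aux_prim χ hprim)
end
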